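/- Let p ≥ 1 and let f : [0,∞) → ℝ be locally integrable, extended by zero on [−1,0). Suppose θ, θ′ ∈ (0,1] with θ > θ′ satisfy ∫_0^∞ |∫_t^{t+θ} f(s) ds|^p dt ≤ m and ∫_0^∞ |∫_t^{t+θ′} f(s) ds|^p dt ≤ m for some m > 0. Then ∫_0^∞ |∫_t^{t+(θ−θ′)} f(s) ds|^p dt ≤ 2^p ( sup_{0 ≤ t ≤ 1} |∫_0^t f(s) ds|^p + m ). -/

import Mathlib

open MeasureTheory Set Filter

/-!
Since `∫_t^{t+θ-θ'} f` is the difference of the windows of lengths `θ` and `θ'` starting at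
`t - θ'`, convexity of `x ↦ x ^ p` bounds its `p`-th power by `2 ^ (p - 1)` times the sum of
theirs. Translating by `θ'` moves the half-line to `[-θ', ∞)`. Over `[0, ∞)` each window
contributes at most `m`. A window starting at `u ∈ [-θ', 0)` only sees `f` on `[0, u + θ]` or
`[0, u + θ']`, both inside `[0, 1]`, so the remaining piece, of length at most one, contributes at
most the supremum.
-/

open scoped ENNReal

section

variable {E : Type*} [NormedAddCommGroup E]

theorem locallyIntegrable_of_locallyIntegrableOn_of_eq_zero {X : Type*} [TopologicalSpace X]
    [T2Space X] [LocallyCompactSpace X] [MeasurableSpace X] [OpensMeasurableSpace X]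
    {μ : Measure X} {f : X → E} {s : Set X} (hs : IsClosed s) (hf : LocallyIntegrableOn f s μ)
    (hf0 : ∀ x ∉ s, f x = 0) : LocallyIntegrable f μ := by
  refine locallyIntegrable_iff.2 fun K hK ↦ ?_
  have hKs : IntegrableOn f (K ∩ s) μ :=
    hf.integrableOn_compact_subset inter_subset_right (hK.inter_right hs)
  exact hKs.of_forall_sdiff_eq_zero hK.measurableSet fun x hx ↦ hf0 x fun hxs ↦ hx.2 ⟨hx.1, hxs⟩

theorem lintegral_enorm_sub_rpow_le {α : Type*} [MeasurableSpace α] {μ : Measure α} {g h : α → E}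
    (hg : AEStronglyMeasurable g μ) {p : ℝ} (hp : 1 ≤ p) :
    ∫⁻ x, ‖g x - h x‖ₑ ^ p ∂μ
      ≤ 2 ^ (p - 1) * (∫⁻ x, ‖g x‖ₑ ^ p ∂μ + ∫⁻ x, ‖h x‖ₑ ^ p ∂μ) := by
  calc ∫⁻ x, ‖g x - h x‖ₑ ^ p ∂μ
      ≤ ∫⁻ x, 2 ^ (p - 1) * (‖g x‖ₑ ^ p + ‖h x‖ₑ ^ p) ∂μ := by
        refine lintegral_mono fun x ↦ ?_
        exact (ENNReal.rpow_le_rpow enorm_sub_le (by linarith)).trans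
          (ENNReal.rpow_add_le_mul_rpow_add_rpow _ _ hp)
    _ = 2 ^ (p - 1) * (∫⁻ x, ‖g x‖ₑ ^ p ∂μ + ∫⁻ x, ‖h x‖ₑ ^ p ∂μ) := by
        rw [lintegral_const_mul' _ _ (by finiteness), lintegral_add_left' (hg.enorm.pow_const p)]

theorem setLIntegral_Ici_comp_sub_right (g : ℝ → ℝ≥0∞) (a d : ℝ) :
    ∫⁻ t in Ici a, g (t - d) = ∫⁻ u in Ici (a - d), g u := by
  simpa only [preimage_sub_const_Ici, sub_add_cancel] using
    (measurePreserving_sub_right volume d).setLIntegral_comp_preimage_emb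
      (measurableEmbedding_subRight d) g (Ici (a - d))

theorem setLIntegral_Ici_comp_sub_right_le {g : ℝ → ℝ≥0∞} {C : ℝ≥0∞} {a d : ℝ}
    (hg : ∀ u ∈ Ico (a - d) a, g u ≤ C) :
    ∫⁻ t in Ici a, g (t - d) ≤ C * ENNReal.ofReal d + ∫⁻ u in Ici a, g u := by
  have hIco : ∫⁻ u in Ico (a - d) a, g u ≤ C * ENNReal.ofReal d :=
    calc ∫⁻ u in Ico (a - d) a, g u
        ≤ ∫⁻ _ in Ico (a - d) a, C := setLIntegral_mono' measurableSet_Ico hg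
      _ = C * ENNReal.ofReal d := by rw [setLIntegral_const, Real.volume_Ico, sub_sub_cancel]
  calc ∫⁻ t in Ici a, g (t - d)
      = ∫⁻ u in Ici (a - d), g u := setLIntegral_Ici_comp_sub_right g a d
    _ ≤ ∫⁻ u in Ico (a - d) a ∪ Ici a, g u := lintegral_mono_set Ici_subset_Ico_union_Ici
    _ ≤ (∫⁻ u in Ico (a - d) a, g u) + ∫⁻ u in Ici a, g u := lintegral_union_le _ _ _
    _ ≤ C * ENNReal.ofReal d + ∫⁻ u in Ici a, g u := by gcongr

variable [NormedSpace ℝ E] {f : ℝ → E}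

theorem intervalIntegral_eq_zero_of_forall_lt {a b c : ℝ} (hf : ∀ t < c, f t = 0) (ha : a ≤ c)
    (hb : b ≤ c) : ∫ s in a..b, f s = 0 := by
  rw [intervalIntegral.integral_congr_uIoo (g := fun _ ↦ 0) fun s hs ↦
    hf s (hs.2.trans_le (max_le ha hb)), intervalIntegral.integral_zero]

theorem continuous_intervalIntegral_add_right (hf : ∀ a b, IntervalIntegrable f volume a b)
    (c : ℝ) : Continuous fun t ↦ ∫ s in t..t + c, f s := by
  have hprim : Continuous fun x ↦ ∫ s in (0 : ℝ)..x, f s :=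
    intervalIntegral.continuous_primitive hf 0
  refine ((hprim.comp (continuous_add_const c)).sub hprim).congr fun t ↦ ?_
  exact intervalIntegral.integral_interval_sub_left (hf 0 (t + c)) (hf 0 t)

theorem intervalIntegral_add_sub_eq_sub (hf : ∀ a b, IntervalIntegrable f volume a b)
    (t c d : ℝ) :
    ∫ s in t..t + (c - d), f s
      = (∫ s in t - d..t - d + c, f s) - ∫ s in t - d..t - d + d, f s := by
  rw [intervalIntegral.integral_interval_sub_left (hf _ _) (hf _ _), sub_add_cancel,
    sub_add_eq_add_sub, add_sub_assoc]

theorem enorm_intervalIntegral_rpow_le_of_forall_lt {a b c d : ℝ} (hf0 : ∀ t < c, f t = 0)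
    (hf : ∀ a b, IntervalIntegrable f volume a b) {p : ℝ} {C : ℝ≥0∞}
    (hC : ∀ t ∈ Icc c d, ‖∫ s in c..t, f s‖ₑ ^ p ≤ C) (hcd : c ≤ d) (ha : a ≤ c) (hb : b ≤ d) :
    ‖∫ s in a..b, f s‖ₑ ^ p ≤ C := by
  have hzero : ∀ x ≤ c, ∫ s in a..x, f s = 0 := fun x hx ↦
    intervalIntegral_eq_zero_of_forall_lt hf0 ha hx
  rcases le_total c b with hcb | hbc
  · rw [← intervalIntegral.integral_add_adjacent_intervals (hf a c) (hf c b), hzero c le_rfl,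
      zero_add]
    exact hC b ⟨hcb, hb⟩
  · simpa only [hzero b hbc, intervalIntegral.integral_same] using hC c ⟨le_rfl, hcd⟩

theorem lintegral_enorm_window_comp_sub_rpow_le (hf : ∀ a b, IntervalIntegrable f volume a b)
    (hf0 : ∀ t < 0, f t = 0) {p : ℝ} {C : ℝ≥0∞}
    (hC : ∀ t ∈ Icc (0 : ℝ) 1, ‖∫ s in (0 : ℝ)..t, f s‖ₑ ^ p ≤ C) {c d : ℝ} (hc : c ≤ 1)
    (hd : d ≤ 1) :
    ∫⁻ t in Ici (0 : ℝ), ‖∫ s in t - d..t - d + c, f s‖ₑ ^ p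
      ≤ C + ∫⁻ t in Ici (0 : ℝ), ‖∫ s in t..t + c, f s‖ₑ ^ p := by
  have hneg : ∀ u ∈ Ico (0 - d) 0, ‖∫ s in u..u + c, f s‖ₑ ^ p ≤ C := fun u hu ↦
    enorm_intervalIntegral_rpow_le_of_forall_lt hf0 hf hC zero_le_one hu.2.le
      (by linarith [hu.2])
  calc ∫⁻ t in Ici (0 : ℝ), ‖∫ s in t - d..t - d + c, f s‖ₑ ^ p
      ≤ C * ENNReal.ofReal d + ∫⁻ t in Ici (0 : ℝ), ‖∫ s in t..t + c, f s‖ₑ ^ p :=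
        setLIntegral_Ici_comp_sub_right_le hneg
    _ ≤ C + ∫⁻ t in Ici (0 : ℝ), ‖∫ s in t..t + c, f s‖ₑ ^ p := by
        gcongr
        exact mul_le_of_le_one_right' (ENNReal.ofReal_le_one.2 hd)

theorem lintegral_enorm_window_sub_rpow_le (hf : ∀ a b, IntervalIntegrable f volume a b)
    (hf0 : ∀ t < 0, f t = 0) {p : ℝ} (hp : 1 ≤ p) {θ θ' : ℝ} (hθ : θ ≤ 1) (hθ' : θ' ≤ 1)
    {C M : ℝ≥0∞} (hC : ∀ t ∈ Icc (0 : ℝ) 1, ‖∫ s in (0 : ℝ)..t, f s‖ₑ ^ p ≤ C)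
    (h1 : ∫⁻ t in Ici (0 : ℝ), ‖∫ s in t..t + θ, f s‖ₑ ^ p ≤ M)
    (h2 : ∫⁻ t in Ici (0 : ℝ), ‖∫ s in t..t + θ', f s‖ₑ ^ p ≤ M) :
    ∫⁻ t in Ici (0 : ℝ), ‖∫ s in t..t + (θ - θ'), f s‖ₑ ^ p ≤ 2 ^ p * (C + M) := by
  have hshift : ∀ c ≤ 1, ∫⁻ t in Ici (0 : ℝ), ‖∫ s in t..t + c, f s‖ₑ ^ p ≤ M →
      ∫⁻ t in Ici (0 : ℝ), ‖∫ s in t - θ'..t - θ' + c, f s‖ₑ ^ p ≤ C + M := fun c hc hM ↦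
    (lintegral_enorm_window_comp_sub_rpow_le hf hf0 hC hc hθ').trans (by gcongr)
  have hcont : Continuous fun t ↦ ∫ s in t - θ'..t - θ' + θ, f s :=
    (continuous_intervalIntegral_add_right hf θ).comp (continuous_sub_right θ')
  have hpow : (2 : ℝ≥0∞) ^ (p - 1) * 2 = 2 ^ p := by
    simpa using (ENNReal.rpow_add (p - 1) 1 two_ne_zero ENNReal.ofNat_ne_top).symm
  simp only [intervalIntegral_add_sub_eq_sub hf _ θ θ']
  calc _ ≤ 2 ^ (p - 1) * (_ + _) := lintegral_enorm_sub_rpow_le hcont.aestronglyMeasurable hp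
    _ ≤ 2 ^ (p - 1) * ((C + M) + (C + M)) := by
        gcongr
        exacts [hshift θ hθ h1, hshift θ' hθ' h2]
    _ = 2 ^ p * (C + M) := by rw [← two_mul, ← mul_assoc, hpow]

theorem norm_primitive_rpow_le_iSup (hf : ∀ a b, IntervalIntegrable f volume a b) {p : ℝ}
    (hp : 0 ≤ p) {a b x : ℝ} (hx : x ∈ Icc a b) :
    ‖∫ s in a..x, f s‖ ^ p ≤ ⨆ t : Icc a b, ‖∫ s in a..(t : ℝ), f s‖ ^ p := by
  have hcont : Continuous fun t ↦ ‖∫ s in a..t, f s‖ ^ p :=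
    (intervalIntegral.continuous_primitive hf a).norm.rpow_const fun _ ↦ Or.inr hp
  have hbdd : BddAbove (range fun t : Icc a b ↦ ‖∫ s in a..(t : ℝ), f s‖ ^ p) :=
    (isCompact_range (hcont.comp continuous_subtype_val)).bddAbove
  exact le_ciSup hbdd ⟨x, hx⟩

theorem window_difference_estimate_general [CompleteSpace E]
    {p : ℝ} (hp : 1 ≤ p) (hf : LocallyIntegrableOn f (Ici 0)) (hf0 : ∀ t < 0, f t = 0)
    {θ θ' m : ℝ} (hθ : θ ≤ 1) (hθ' : θ' ≤ 1) (hm : 0 ≤ m)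
    (h1 : ∫⁻ t in Ici (0 : ℝ), ENNReal.ofReal (‖∫ s in t..t + θ, f s‖ ^ p) ≤ ENNReal.ofReal m)
    (h2 : ∫⁻ t in Ici (0 : ℝ), ENNReal.ofReal (‖∫ s in t..t + θ', f s‖ ^ p)
      ≤ ENNReal.ofReal m) :
    ∫⁻ t in Ici (0 : ℝ), ENNReal.ofReal (‖∫ s in t..t + (θ - θ'), f s‖ ^ p)
      ≤ ENNReal.ofReal
          (2 ^ p * ((⨆ t : Icc (0 : ℝ) 1, ‖∫ s in (0 : ℝ)..(t : ℝ), f s‖ ^ p) + m)) := by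
  have hp0 : 0 ≤ p := zero_le_one.trans hp
  have hint : ∀ a b, IntervalIntegrable f volume a b := fun a b ↦
    ((locallyIntegrable_of_locallyIntegrableOn_of_eq_zero isClosed_Ici hf fun t ht ↦
      hf0 t (not_le.1 ht)).integrableOn_isCompact isCompact_uIcc).intervalIntegrable
  have hsup : 0 ≤ ⨆ t : Icc (0 : ℝ) 1, ‖∫ s in (0 : ℝ)..(t : ℝ), f s‖ ^ p :=
    Real.iSup_nonneg fun _ ↦ by positivity
  have hofReal : ∀ x : E, ENNReal.ofReal (‖x‖ ^ p) = ‖x‖ₑ ^ p := fun x ↦ by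
    rw [← ENNReal.ofReal_rpow_of_nonneg (norm_nonneg x) hp0, ofReal_norm]
  have hpow : ENNReal.ofReal (2 ^ p) = 2 ^ p := by
    rw [← ENNReal.ofReal_rpow_of_nonneg zero_le_two hp0, ENNReal.ofReal_ofNat]
  rw [ENNReal.ofReal_mul (by positivity), ENNReal.ofReal_add hsup hm, hpow]
  simp only [hofReal] at h1 h2 ⊢
  refine lintegral_enorm_window_sub_rpow_le hint hf0 hp hθ hθ' (fun t ht ↦ ?_) h1 h2
  rw [← hofReal]
  exact ENNReal.ofReal_le_ofReal (norm_primitive_rpow_le_iSup hint hp0 ht)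

end

/-- difference-of-windows estimate in Lemma 2.1: with `f` locally
integrable on `[0,∞)` extended by zero on `[-1,0)`, if `θ, θ' ∈ (0,1]` with `θ' < θ` satisfy
`∫_0^∞ |∫_t^{t+θ} f|^p dt ≤ m` and `∫_0^∞ |∫_t^{t+θ'} f|^p dt ≤ m`, then
`∫_0^∞ |∫_t^{t+(θ-θ')} f|^p dt ≤ 2^p (sup_{0 ≤ t ≤ 1} |∫_0^t f|^p + m)`. -/
theorem window_difference_estimate
    (p : ℝ) (hp : 1 ≤ p) (f : ℝ → ℝ)
    (hf : LocallyIntegrableOn f (Ici 0))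
    (hf0 : ∀ t < (0:ℝ), f t = 0)
    (θ θ' m : ℝ) (hθ : θ ∈ Ioc (0:ℝ) 1) (hθ' : θ' ∈ Ioc (0:ℝ) 1) (hlt : θ' < θ)
    (hm : 0 < m)
    (h1 : ∫⁻ t in Ici (0:ℝ), ENNReal.ofReal (|∫ s in t..(t + θ), f s| ^ p)
        ≤ ENNReal.ofReal m)
    (h2 : ∫⁻ t in Ici (0:ℝ), ENNReal.ofReal (|∫ s in t..(t + θ'), f s| ^ p)
        ≤ ENNReal.ofReal m) :
    ∫⁻ t in Ici (0:ℝ), ENNReal.ofReal (|∫ s in t..(t + (θ - θ')), f s| ^ p)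
      ≤ ENNReal.ofReal
          ((2:ℝ) ^ p * ((⨆ t : Icc (0:ℝ) 1, |∫ s in (0:ℝ)..(t:ℝ), f s| ^ p) + m)) := by
  exact window_difference_estimate_general hp hf hf0 hθ.2 hθ'.2 hm.le h1 h2
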